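/- Let t > 0 and let x : ℝ → ℝ be a function such that for every ρ ∈ ℝ, x(ρ) > 0 and 2·x(ρ)³ + 3t·x(ρ)² = 3·e^{2ρ}. Then x(ρ)·√t·e^{−ρ} → 1 as ρ → −∞. -/

import Mathlib

/-- Asymptotics of the positive root of `2x³ + 3t·x² = 3e^{2ρ}`: for each `t > 0`,
`x(ρ) ∼ t^{-1/2} e^{ρ}` as `ρ → −∞`, i.e. `x(ρ)·√t·e^{−ρ} → 1`. -/
theorem cubic_root_asymptotics (t : ℝ) (ht : 0 < t) (x : ℝ → ℝ)
    (hx : ∀ ρ : ℝ, 0 < x ρ ∧ 2 * (x ρ) ^ 3 + 3 * t * (x ρ) ^ 2 = 3 * Real.exp (2 * ρ)) :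
    Filter.Tendsto (fun ρ : ℝ => x ρ * Real.sqrt t * Real.exp (-ρ))
      Filter.atBot (nhds 1) := by
  have hs : 0 < Real.sqrt t := Real.sqrt_pos.mpr ht
  have hst : Real.sqrt t ^ 2 = t := Real.sq_sqrt ht.le
  set s := Real.sqrt t with hsdef
  have key : ∀ ρ : ℝ, 1 - 2 / (3 * t * s) * Real.exp ρ ≤ x ρ * s * Real.exp (-ρ) ∧
      x ρ * s * Real.exp (-ρ) ≤ 1 := by
    intro ρ
    obtain ⟨h0, h1⟩ := hx ρ
    have hE : 0 < Real.exp ρ := Real.exp_pos ρ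
    have hF : 0 < Real.exp (-ρ) := Real.exp_pos _
    have hEF : Real.exp ρ * Real.exp (-ρ) = 1 := by rw [← Real.exp_add]; simp
    have h2 : Real.exp (2 * ρ) = Real.exp ρ ^ 2 := by rw [← Real.exp_nat_mul]; simp
    rw [h2] at h1
    generalize Real.exp ρ = e at *
    generalize Real.exp (-ρ) = f at *
    generalize x ρ = z at *
    have hy : 0 < z * s * f := by positivity
    have hxz : z = z * s * f * e / s := by
      field_simp
      linear_combination -hEF
    have hmain : (z * s * f) ^ 2 * (2 * z + 3 * t) = 3 * t := by
      have : (z * s * f) ^ 2 * (2 * z + 3 * t)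
          = s ^ 2 * f ^ 2 * (2 * z ^ 3 + 3 * t * z ^ 2) := by ring
      rw [this, h1, hst]
      linear_combination 3 * t * (e * f + 1) * hEF
    generalize z * s * f = y at *
    have hy1 : y ≤ 1 := by
      by_contra! h
      nlinarith [mul_pos (sub_pos.mpr h) ht, mul_pos (mul_pos (sub_pos.mpr h) ht) hy,
        mul_pos (pow_pos hy 2) h0]
    refine ⟨?_, hy1⟩
    have hze : z ≤ e / s := by
      rw [hxz]; gcongr; nlinarith
    have h3 : 3 * t * (1 - y) ≤ 2 * z := by
      have hyy : y ^ 2 ≤ y := by nlinarith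
      have hy2 : y ^ 2 ≤ 1 := by linarith
      nlinarith [mul_nonneg (sub_nonneg.mpr hyy) ht.le, mul_nonneg (sub_nonneg.mpr hy2) h0.le]
    have h4 : 1 - y ≤ 2 * (e / s) / (3 * t) := by
      rw [le_div_iff₀ (by positivity)]; linarith
    have h5 : 2 / (3 * t * s) * e = 2 * (e / s) / (3 * t) := by field_simp
    linarith
  refine tendsto_of_tendsto_of_tendsto_of_le_of_le ?_ tendsto_const_nhds
    (fun ρ => (key ρ).1) (fun ρ => (key ρ).2)
  simpa using (Real.tendsto_exp_atBot.const_mul (2 / (3 * t * s))).const_sub 1
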